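/- arXiv:1603.00011 — 4 statements merged into one kernel-verified Lean document; each statement's English description precedes it below -/
import Mathlib

section
/- Let n ≥ 4. Every strongly stable ideal I ⊊ S = K[x_1,…,x_n] of initial degree 2 that has a corner of the form (k,2) (a corner in degree 2) has at most n−2 corners. -/
namespace ExtremalBetti

/-- A monomial of `K[x_1,…,x_n]`, identified with its exponent vector in `ℕ^n`. -/
abbrev Mon (n : ℕ) := Fin n → ℕ

/-- The degree of a monomial. -/
def degree {n : ℕ} (u : Mon n) : ℕ := ∑ i, u i

/-- `m(u)`: the (1-based) index of the largest variable dividing `u`; `m(1) = 0`. -/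
def maxVar {n : ℕ} (u : Mon n) : ℕ :=
  (Finset.univ.filter (fun i : Fin n => u i ≠ 0)).sup (fun i => (i : ℕ) + 1)

/-- The exponent vector of the variable `x_q` (1-based index `q`). -/
def X (n q : ℕ) : Mon n := fun i => if (i : ℕ) + 1 = q then 1 else 0

/-- `lexLT u v` : `v` is strictly lex-greater than `u` (lex order induced by
`x_1 > x_2 > … > x_n`). -/
def lexLT {n : ℕ} (u v : Mon n) : Prop :=
  ∃ i : Fin n, (∀ j : Fin n, j < i → u j = v j) ∧ u i < v i

/-- `lexLE u v` : `v ≥_lex u`. -/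
def lexLE {n : ℕ} (u v : Mon n) : Prop := u = v ∨ lexLT u v

/-- `L(top, bot)` in degree `d`: monomials `z` of degree `d` with `top ≥_lex z ≥_lex bot`. -/
def Lset {n : ℕ} (d : ℕ) (top bot : Mon n) : Set (Mon n) :=
  {z | degree z = d ∧ lexLE z top ∧ lexLE bot z}

/-- `A(k,d)`: monomials of degree `d` with `m(u) = k+1`. -/
def A (n k d : ℕ) : Set (Mon n) := {u | degree u = d ∧ maxVar u = k + 1}

/-- The shadow of a set of monomials. -/
def shad {n : ℕ} (Ms : Set (Mon n)) : Set (Mon n) :=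
  {z | ∃ u ∈ Ms, ∃ i : Fin n, z = u + Pi.single i 1}

/-- The `t`-fold iterated shadow. -/
def shadIter {n : ℕ} : ℕ → Set (Mon n) → Set (Mon n)
  | 0, Ms => Ms
  | t + 1, Ms => shad (shadIter t Ms)

/-- The lexicographic shadow `LexShad^t(𝔐) = L(x_1^{d+t}, w x_n^t)`, where `w` is the
lex-smallest element of `𝔐` (empty if `𝔐` is empty or has no lex-smallest element). -/
def lexShad {n : ℕ} (t : ℕ) (Ms : Set (Mon n)) : Set (Mon n) :=
  {z | ∃ w ∈ Ms, (∀ v ∈ Ms, lexLE w v) ∧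
      z ∈ Lset (degree w + t) ((degree w + t) • X n 1) (w + t • X n n)}

/-- A set of monomials is a monomial ideal iff it is upward closed under divisibility. -/
def IsMonIdeal {n : ℕ} (I : Set (Mon n)) : Prop :=
  ∀ u ∈ I, ∀ v : Mon n, (∀ i, u i ≤ v i) → v ∈ I

/-- `G(I)`: the minimal monomial generators of `I`. -/
def minGens {n : ℕ} (I : Set (Mon n)) : Set (Mon n) :=
  {u ∈ I | ∀ v ∈ I, (∀ i, v i ≤ u i) → v = u}

/-- `G(I)_d`: the minimal generators of degree `d`. -/
def gens {n : ℕ} (I : Set (Mon n)) (d : ℕ) : Set (Mon n) :=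
  {u ∈ minGens I | degree u = d}

/-- `I` is a strongly stable (monomial) ideal with `I ⊊ S` (i.e. `1 ∉ I`):
for every minimal generator `u`, every `i` with `x_i ∣ u` and every `j < i`,
`(x_j u)/x_i ∈ I`. -/
def StronglyStable {n : ℕ} (I : Set (Mon n)) : Prop :=
  IsMonIdeal I ∧ (0 : Mon n) ∉ I ∧
    ∀ u ∈ minGens I, ∀ i : Fin n, u i ≠ 0 →
      ∀ j : Fin n, j < i → (u - Pi.single i 1 + Pi.single j 1) ∈ I

/-- The initial degree `α(I)` of the monomial ideal `I` equals `d`. -/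
def initialDegree {n : ℕ} (I : Set (Mon n)) (d : ℕ) : Prop :=
  (∃ u ∈ I, degree u = d) ∧ ∀ u ∈ I, d ≤ degree u

/-- `(k,ℓ)` is a corner of `I`: `k, ℓ ≥ 1`, `k + 1 = max{m(u) : u ∈ G(I)_ℓ}`, and
`m(u) ≤ k` for every `u ∈ G(I)_j` with `j > ℓ`. -/
def IsCorner {n : ℕ} (I : Set (Mon n)) (k ℓ : ℕ) : Prop :=
  1 ≤ k ∧ 1 ≤ ℓ ∧
  (∃ u ∈ gens I ℓ, maxVar u = k + 1) ∧
  (∀ u ∈ gens I ℓ, maxVar u ≤ k + 1) ∧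
  (∀ j, ℓ < j → ∀ u ∈ gens I j, maxVar u ≤ k)

/-- The value of the corner `(k,ℓ)`: `|{u ∈ G(I)_ℓ : m(u) = k+1}|`. -/
noncomputable def cornerValue {n : ℕ} (I : Set (Mon n)) (k ℓ : ℕ) : ℕ :=
  {u ∈ gens I ℓ | maxVar u = k + 1}.ncard

/-- The set of corners of `I`. -/
def corners {n : ℕ} (I : Set (Mon n)) : Set (ℕ × ℕ) :=
  {c | IsCorner I c.1 c.2}

/-- `(k,ℓ)` is a corner of the submodule `M = ⊕_j I_j e_j` of `S^m`. -/
def IsCornerMod {n m : ℕ} (I : Fin m → Set (Mon n)) (k ℓ : ℕ) : Prop :=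
  1 ≤ k ∧ 1 ≤ ℓ ∧
  (∃ j, ∃ u ∈ gens (I j) ℓ, maxVar u = k + 1) ∧
  (∀ j, ∀ u ∈ gens (I j) ℓ, maxVar u ≤ k + 1) ∧
  (∀ d, ℓ < d → ∀ j, ∀ u ∈ gens (I j) d, maxVar u ≤ k)

/-- The value of the corner `(k,ℓ)` of `M = ⊕_j I_j e_j`: the number of minimal
generators `u e_j` with `deg u = ℓ` and `m(u) = k+1`. -/
noncomputable def cornerValueMod {n m : ℕ} (I : Fin m → Set (Mon n)) (k ℓ : ℕ) : ℕ :=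
  {p : Mon n × Fin m | p.1 ∈ gens (I p.2) ℓ ∧ maxVar p.1 = k + 1}.ncard

/-- The set of corners of the submodule `M = ⊕_j I_j e_j`. -/
def cornersMod {n m : ℕ} (I : Fin m → Set (Mon n)) : Set (ℕ × ℕ) :=
  {c | IsCornerMod I c.1 c.2}

/-- `t = max{p : λ_p ≤ s − p}` (and `t = 0` if no such `p` exists). -/
def tVal (s : ℕ) (l : ℕ → ℕ) : ℕ :=
  ((Finset.Icc 1 s).filter (fun p => l p ≤ s - p)).sup id

/-- The associated sets `B_1, …, B_s` of the corner sequence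
`(κ_1,λ_1), …, (κ_s,λ_s)` (given by `k, l : ℕ → ℕ` on indices `1,…,s`);
`B_0 = ∅`. -/
def assocB (n s : ℕ) (k l : ℕ → ℕ) (p : ℕ) : Set (Mon n) :=
  if p = 0 then ∅
  else if s = 1 then A n (k 1) (l 1)
  else if p = s then {u ∈ A n (k s) (l s) | lexLE ((l s) • X n (k s + 1)) u}
  else if l 1 = 2 ∧ p = 1 then
    {u ∈ A n (k 1) 2 |
      lexLE (X n (if s = 2 then k 2 else k s - 1) + X n (k 1 + 1)) u}
  else if p ≤ tVal s l then
    {u ∈ A n (k p) (l p) |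
      lexLE ((∑ j ∈ Finset.Icc (s - l p + 3) s, X n (k j)) +
          X n (k (s - l p + 2) - 1) + X n (k p + 1)) u}
  else
    {u ∈ A n (k p) (l p) |
      lexLE ((∑ j ∈ Finset.Icc (p + 1) s, X n (k j)) +
          (l p - (s - p)) • X n (k p + 1)) u}

/-- The admissible bound `b_p = |B_p \ LexShad^{λ_p−λ_{p−1}}(B_{p−1})|` of the
`p`-th pair of the corner sequence. -/
noncomputable def admissibleBound (n s : ℕ) (k l : ℕ → ℕ) (p : ℕ) : ℕ :=
  (assocB n s k l p \ lexShad (l p - l (p - 1)) (assocB n s k l (p - 1))).ncard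


lemma exists_minGen {n : ℕ} (I : Set (Mon n)) : ∀ (d : ℕ) (u : Mon n), degree u = d → u ∈ I →
    ∃ v ∈ minGens I, ∀ i, v i ≤ u i := by
  intro d
  induction d using Nat.strong_induction_on with
  | _ d ih =>
    intro u hd hu
    by_cases h : u ∈ minGens I
    · exact ⟨u, h, fun i => le_rfl⟩
    · have h2 : ∃ v ∈ I, (∀ i, v i ≤ u i) ∧ v ≠ u := by
        by_contra hc
        push Not at hc
        exact h ⟨hu, hc⟩
      obtain ⟨v, hv, hle, hne⟩ := h2
      have hlt : degree v < degree u := by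
        obtain ⟨i, hi⟩ := Function.ne_iff.mp hne
        exact Finset.sum_lt_sum (fun i _ => hle i) ⟨i, Finset.mem_univ _, lt_of_le_of_ne (hle i) hi⟩
      obtain ⟨w, hw, hwv⟩ := ih (degree v) (hd ▸ hlt) v rfl hv
      exact ⟨w, hw, fun i => (hwv i).trans (hle i)⟩

lemma move {n : ℕ} {I : Set (Mon n)} (hI : StronglyStable I) (p : Mon n) (i j : Fin n)
    (hij : j ≤ i) (h : p + Pi.single i 1 ∈ I) : p + Pi.single j 1 ∈ I := by
  rcases eq_or_lt_of_le hij with rfl | hij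
  · exact h
  obtain ⟨v, hv, hle⟩ := exists_minGen I _ _ rfl h
  by_cases hc : v i ≤ p i
  · refine hI.1 v hv.1 _ fun t => ?_
    have := hle t
    by_cases ht : t = i
    · subst ht
      simp only [Pi.add_apply]; omega
    · simp only [Pi.add_apply, Pi.single_eq_of_ne ht] at this ⊢; omega
  · refine hI.1 _ (hI.2.2 v hv i (by omega) j hij) _ fun t => ?_
    have := hle t
    by_cases ht : t = i
    · subst ht
      simp only [Pi.add_apply, Pi.sub_apply, Pi.single_eq_same] at this ⊢; omega
    · simp only [Pi.add_apply, Pi.sub_apply, Pi.single_eq_of_ne ht] at this ⊢; omega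

lemma moves {n : ℕ} {I : Set (Mon n)} (hI : StronglyStable I) (i j : Fin n)
    (hij : j ≤ i) (m : ℕ) : ∀ (p : Mon n), p + m • Pi.single i 1 ∈ I →
    p + m • Pi.single j 1 ∈ I := by
  induction m with
  | zero => intro p h; simpa using h
  | succ m ih =>
    intro p h
    rw [succ_nsmul, ← add_assoc] at h ⊢
    have h1 := move hI _ _ _ hij h
    rw [add_right_comm] at h1 ⊢
    exact ih _ h1

lemma le_maxVar {n : ℕ} (u : Mon n) (i : Fin n) (h : u i ≠ 0) : (i : ℕ) + 1 ≤ maxVar u :=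
  Finset.le_sup (f := fun i : Fin n => (i : ℕ) + 1) (by simp [h])

lemma maxVar_le {n : ℕ} (u : Mon n) : maxVar u ≤ n :=
  Finset.sup_le fun i _ => i.2

lemma exists_maxVar {n : ℕ} (u : Mon n) (k : ℕ) (h : maxVar u = k + 1) :
    ∃ i : Fin n, (i : ℕ) = k ∧ u i ≠ 0 := by
  by_contra hc
  push Not at hc
  have : maxVar u ≤ k := by
    refine Finset.sup_le fun i hi => ?_
    simp only [Finset.mem_filter, Finset.mem_univ, true_and] at hi
    have h1 := le_maxVar u i hi
    have h2 : (i : ℕ) ≠ k := fun e => hi (hc i e)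
    omega
  omega

lemma degree_add {n : ℕ} (u v : Mon n) : degree (u + v) = degree u + degree v := by
  simp [degree, Finset.sum_add_distrib]

lemma degree_single {n : ℕ} (i : Fin n) (m : ℕ) : degree (Pi.single i m : Mon n) = m := by
  simp [degree]

lemma exists_of_degree_pos {n : ℕ} (u : Mon n) (h : 0 < degree u) : ∃ i, u i ≠ 0 := by
  by_contra hc
  push Not at hc
  simp [degree, hc] at h

lemma split {n : ℕ} (u : Mon n) (i : Fin n) (h : u i ≠ 0) :
    u = (u - Pi.single i 1) + Pi.single i 1 := by
  funext t
  by_cases ht : t = i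
  · subst ht; simp; omega
  · simp [Pi.single_eq_of_ne ht]

lemma eq_zero_of_degree {n : ℕ} (u : Mon n) (h : degree u = 0) : u = 0 := by
  funext i
  simpa using (Finset.sum_eq_zero_iff.mp h) i (Finset.mem_univ i)

lemma corner_lt {n : ℕ} {I : Set (Mon n)} {k l k' l' : ℕ} (h : IsCorner I k l)
    (h' : IsCorner I k' l') (hl : l < l') : k' < k := by
  obtain ⟨u, hu, hm⟩ := h'.2.2.1
  have := h.2.2.2.2 l' hl u hu
  omega

lemma corner_eq {n : ℕ} {I : Set (Mon n)} {k k' l : ℕ} (h : IsCorner I k l)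
    (h' : IsCorner I k' l) : k' = k := by
  obtain ⟨u, hu, hm⟩ := h'.2.2.1
  obtain ⟨v, hv, hn⟩ := h.2.2.1
  have := h.2.2.2.1 u hu
  have := h'.2.2.2.1 v hv
  omega

lemma key {n : ℕ} (hn : 4 ≤ n) {I : Set (Mon n)}
    (hI : StronglyStable I) (hα : initialDegree I 2)
    {k l1 l2 l3 : ℕ} (hk : IsCorner I k 2) (h1 : IsCorner I 1 l1) (h2 : IsCorner I 2 l2)
    (h3 : IsCorner I 3 l3) : False := by
  have hl12 : l2 < l1 := by
    rcases lt_trichotomy l1 l2 with h | rfl | h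
    · have := corner_lt h1 h2 h; omega
    · have := corner_eq h1 h2; omega
    · exact h
  have hl23 : l3 < l2 := by
    rcases lt_trichotomy l2 l3 with h | rfl | h
    · have := corner_lt h2 h3 h; omega
    · have := corner_eq h2 h3; omega
    · exact h
  have hl3 : 2 ≤ l3 := by
    obtain ⟨u, hu, -⟩ := h3.2.2.1
    have := hα.2 u hu.1.1
    rw [hu.2] at this
    exact this
  have hk3 : 3 ≤ k := by
    rcases eq_or_lt_of_le hl3 with h | h
    · subst h; have := corner_eq hk h3; omega
    · have := corner_lt hk h3 h; omega
  -- the indices of the first three variables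
  obtain ⟨z, hz⟩ : ∃ z : Fin n, (z : ℕ) = 0 := ⟨⟨0, by omega⟩, rfl⟩
  obtain ⟨o, ho⟩ : ∃ z : Fin n, (z : ℕ) = 1 := ⟨⟨1, by omega⟩, rfl⟩
  obtain ⟨t, ht⟩ : ∃ z : Fin n, (z : ℕ) = 2 := ⟨⟨2, by omega⟩, rfl⟩
  have hquad : ∀ i : Fin n, (i : ℕ) ≤ 2 → (Pi.single z 1 + Pi.single i 1 : Mon n) ∈ I := by
    intro i hi
    obtain ⟨w, hw, hm⟩ := hk.2.2.1
    obtain ⟨q, hq, hwq⟩ := exists_maxVar w k hm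
    have hs := split w q hwq
    have hd := hw.2
    rw [hs, degree_add, degree_single] at hd
    obtain ⟨r, hr⟩ := exists_of_degree_pos (w - Pi.single q 1) (by omega)
    have hs2 := split _ r hr
    rw [hs2, degree_add, degree_single] at hd
    have h0 := eq_zero_of_degree _ (show degree (w - Pi.single q 1 - Pi.single r 1) = 0 by omega)
    rw [h0, zero_add] at hs2
    have hwI := hw.1.1
    rw [hs, hs2] at hwI
    have a1 := move hI _ q i (by rw [Fin.le_def]; omega) hwI
    rw [add_comm] at a1 ⊢
    exact move hI _ r z (by rw [Fin.le_def]; omega) a1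
  have hnoz : ∀ (u : Mon n) (l : ℕ), 2 < l → u ∈ gens I l → maxVar u ≤ 3 → u z = 0 := by
    intro u l hl hu hm
    by_contra hc
    have hs := split u z hc
    have hd := hu.2
    rw [hs, degree_add, degree_single] at hd
    obtain ⟨r, hr⟩ := exists_of_degree_pos (u - Pi.single z 1) (by omega)
    have hs2 := split _ r hr
    have hur : u r ≠ 0 := by
      intro h; apply hr; simp [h]
    have := le_maxVar u r hur
    have hin := hquad r (by omega)
    have he := hu.1.2 _ hin (by
      intro i
      have e1 := congrFun hs i
      have e2 := congrFun hs2 i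
      simp only [Pi.add_apply] at e1 e2 ⊢
      omega)
    have hd' := hu.2
    rw [← he, degree_add, degree_single, degree_single] at hd'
    omega
  have hform : ∀ (u : Mon n) (l : ℕ), 2 < l → u ∈ gens I l → maxVar u ≤ 3 →
      u = (u o) • Pi.single o 1 + (u t) • Pi.single t 1 := by
    intro u l hl hu hm
    have hu0 := hnoz u l hl hu hm
    funext i
    by_cases hi : u i = 0
    · have e1 : i = o ∨ i ≠ o := eq_or_ne _ _
      have e2 : i = t ∨ i ≠ t := eq_or_ne _ _
      rcases e1 with rfl | e1 <;> rcases e2 with rfl | e2 <;> simp_all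
    · have := le_maxVar u i hi
      have hiz : (i : ℕ) ≠ 0 := fun e => hi (by rw [show i = z from Fin.ext (by omega)]; exact hu0)
      have hot : o ≠ t := fun e => by rw [e] at ho; omega
      rcases (show (i : ℕ) = 1 ∨ (i : ℕ) = 2 by omega) with e | e
      · rw [show i = o from Fin.ext (by omega)]; simp [Pi.single_eq_of_ne hot]
      · rw [show i = t from Fin.ext (by omega)]; simp [Pi.single_eq_of_ne hot.symm]
  obtain ⟨u, hu, hum⟩ := h1.2.2.1
  obtain ⟨v, hv, hvm⟩ := h2.2.2.1
  have fu := hform u l1 (by omega) hu (by omega)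
  have fv := hform v l2 (by omega) hv (by omega)
  have hut : u t = 0 := by
    by_contra hc
    have := le_maxVar u t hc
    omega
  have hsm : ∀ (m : ℕ) (i : Fin n), (m • Pi.single i 1 : Mon n) = Pi.single i m := by
    intro m i
    funext j
    by_cases hj : j = i
    · subst hj; simp
    · simp [Pi.single_eq_of_ne hj]
  rw [hut, zero_nsmul, add_zero] at fu
  have hdu := hu.2
  rw [fu, hsm, degree_single] at hdu
  have hvI := hv.1.1
  rw [fv] at hvI
  have hvI2 := moves hI t o (by rw [Fin.le_def]; omega) _ _ hvI
  rw [← add_nsmul] at hvI2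
  have hdv := hv.2
  rw [fv, degree_add, hsm, hsm, degree_single, degree_single] at hdv
  rw [hdv] at hvI2
  have he := hu.1.2 _ hvI2 (by
    intro i
    by_cases hi : i = o
    · subst hi; simp; omega
    · simp [Pi.single_eq_of_ne hi])
  have hd := hu.2
  rw [← he, hsm, degree_single] at hd
  omega

/-- Let `n ≥ 4`. Every strongly stable ideal `I ⊊ S` of initial
degree 2 that has a corner in degree 2 has at most `n − 2` corners. -/
theorem statement0 (n : ℕ) (hn : 4 ≤ n) (I : Set (Mon n))
    (hI : StronglyStable I) (hα : initialDegree I 2)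
    (k : ℕ) (hk : IsCorner I k 2) :
    (corners I).Finite ∧ (corners I).ncard ≤ n - 2 := by
  have hinj : Set.InjOn Prod.fst (corners I) := by
    rintro ⟨a, b⟩ h ⟨c, d⟩ h' (e : a = c)
    subst e
    have h : IsCorner I a b := h
    have h' : IsCorner I a d := h'
    rcases lt_trichotomy b d with hl | rfl | hl
    · have := corner_lt h h' hl; omega
    · rfl
    · have := corner_lt h' h hl; omega
  have hsub : Set.image Prod.fst (corners I) ⊆ (Finset.Icc 1 (n - 1) : Finset ℕ) := by
    rintro _ ⟨⟨a, b⟩, h, rfl⟩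
    have h : IsCorner I a b := h
    obtain ⟨u, -, hm⟩ := h.2.2.1
    have := maxVar_le u
    have := h.1
    simp only [Finset.coe_Icc, Set.mem_Icc]
    omega
  have hmiss : ∃ j, 1 ≤ j ∧ j ≤ 3 ∧ j ∉ Set.image Prod.fst (corners I) := by
    by_contra hc
    push Not at hc
    obtain ⟨⟨_, l1⟩, h1, rfl⟩ := hc 1 (by norm_num) (by norm_num)
    obtain ⟨⟨_, l2⟩, h2, e2⟩ := hc 2 (by norm_num) (by norm_num)
    obtain ⟨⟨_, l3⟩, h3, e3⟩ := hc 3 (by norm_num) (by norm_num)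
    simp only at e2 e3
    subst e2 e3
    exact key hn hI hα hk h1 h2 h3
  obtain ⟨j, hj1, hj3, hj⟩ := hmiss
  refine ⟨Set.Finite.of_finite_image ((Finset.finite_toSet _).subset hsub) hinj, ?_⟩
  rw [← Set.InjOn.ncard_image hinj]
  have hsub2 : Set.image Prod.fst (corners I) ⊆ ((Finset.Icc 1 (n - 1)).erase j : Finset ℕ) := by
    intro x hx
    rw [Finset.mem_coe, Finset.mem_erase]
    exact ⟨fun e => hj (e ▸ hx), hsub hx⟩
  refine (Set.ncard_le_ncard hsub2 (Finset.finite_toSet _)).trans ?_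
  rw [Set.ncard_coe_finset, Finset.card_erase_of_mem (by simp; omega), Nat.card_Icc]
  omega

end ExtremalBetti
end

section
/- Let n ≥ 4 and let (k_1,ℓ_1), (k_2,ℓ_2), …, (k_{n−2},ℓ_{n−2}) be pairs of positive integers with n−1 ≥ k_1 > k_2 > … > k_{n−2} ≥ 2 and ℓ_1 = 2 < ℓ_2 < … < ℓ_{n−2}. Then there exists a strongly stable ideal I ⊊ S = K[x_1,…,x_n] of initial degree 2 whose set of corners is exactly {(k_1,ℓ_1),…,(k_{n−2},ℓ_{n−2})} if and only if k_1 + 1 = n. -/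
namespace ExtremalBetti

def pre {n : ℕ} (u : Mon n) (j : ℕ) : ℕ :=
  ∑ i ∈ Finset.range j, (if h : i < n then u ⟨i, h⟩ else 0)

lemma pre_succ {n : ℕ} (u : Mon n) (i : Fin n) : pre u (i + 1) = pre u i + u i := by
  unfold pre
  rw [Finset.sum_range_succ]
  simp

lemma pre_mono {n : ℕ} (u : Mon n) : Monotone (pre u) := by
  intro a b h
  unfold pre
  exact Finset.sum_le_sum_of_subset (Finset.range_mono h)

lemma pre_le {n : ℕ} {u v : Mon n} (h : ∀ i, u i ≤ v i) (j : ℕ) : pre u j ≤ pre v j := by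
  unfold pre
  apply Finset.sum_le_sum
  intro i _
  split_ifs with hi
  · exact h _
  · exact le_rfl

lemma pre_n {n : ℕ} (u : Mon n) : pre u n = degree u := by
  unfold pre degree
  rw [Finset.sum_range]
  simp

lemma pre_add {n : ℕ} (u v : Mon n) (j : ℕ) : pre (u + v) j = pre u j + pre v j := by
  unfold pre
  rw [← Finset.sum_add_distrib]
  apply Finset.sum_congr rfl
  intro i _
  split_ifs <;> simp

lemma pre_single {n : ℕ} (i : Fin n) (j : ℕ) :
    pre (Pi.single i 1 : Mon n) j = if (i : ℕ) < j then 1 else 0 := by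
  unfold pre
  have : ∀ t ∈ Finset.range j,
      (if h : t < n then (Pi.single i 1 : Mon n) ⟨t, h⟩ else 0) = if t = i then 1 else 0 := by
    intro t _
    by_cases h : t < n
    · simp [h, Pi.single_apply, Fin.ext_iff]
    · have : t ≠ i := by have := i.2; omega
      simp [h, this]
  rw [Finset.sum_congr rfl this]
  simp

lemma sub_add_single {n : ℕ} (u : Mon n) (i : Fin n) (h : u i ≠ 0) :
    u - Pi.single i 1 + Pi.single i 1 = u := by
  funext t
  by_cases ht : t = i
  · subst ht; simp; omega
  · simp [ht]

lemma pre_sub {n : ℕ} (u : Mon n) (i : Fin n) (h : u i ≠ 0) (j : ℕ) :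
    pre u j = pre (u - Pi.single i 1) j + if (i : ℕ) < j then 1 else 0 := by
  conv_lhs => rw [← sub_add_single u i h]
  rw [pre_add, pre_single]

lemma maxVar_le_s4 {n : ℕ} (u : Mon n) (m : ℕ) :
    maxVar u ≤ m ↔ ∀ i, u i ≠ 0 → (i : ℕ) + 1 ≤ m := by
  unfold maxVar
  simp [Finset.sup_le_iff]

/-- prefix sums of the generators `w_p` -/
def ff (n : ℕ) (l : ℕ → ℕ) (p j : ℕ) : ℕ :=
  if n - p + 1 ≤ j then l p
  else if l p ≤ n - 2 - p then (if l p - 1 ≤ j then l p - 1 else j - 1)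
  else min (j - 1) (n - p - 2)

lemma ff_mono (n : ℕ) (l : ℕ → ℕ) (p : ℕ) : Monotone (ff n l p) := by
  intro a b h
  unfold ff
  grind

lemma ff_not (n : ℕ) (l : ℕ → ℕ) (p q : ℕ) (hpq : p < q) (hq : q ≤ n - 2) (hp : 1 ≤ p)
    (h2 : 2 ≤ l p) (hl : l p < l q) : ∃ j ≤ n, ff n l q j < ff n l p j := by
  by_cases hs : l p ≤ n - 2 - p
  · by_cases hq2 : l q ≤ n - 2 - q
    · refine ⟨l p - 1, by omega, ?_⟩
      unfold ff; grind
    · by_cases hc : l p - 1 ≤ n - q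
      · refine ⟨l p - 1, by omega, ?_⟩
        unfold ff; grind
      · refine ⟨n - q, by omega, ?_⟩
        unfold ff; grind
  · by_cases hq2 : l q ≤ n - 2 - q
    · omega
    · refine ⟨n - q, by omega, ?_⟩
      unfold ff; grind

def ww (n : ℕ) (l : ℕ → ℕ) (p : ℕ) : Mon n := fun i => ff n l p (i + 1) - ff n l p i

lemma ff_zero (n : ℕ) (l : ℕ → ℕ) (p : ℕ) (h2 : 2 ≤ l p) : ff n l p 0 = 0 := by
  unfold ff; grind

lemma pre_ww (n : ℕ) (l : ℕ → ℕ) (p : ℕ) (h2 : 2 ≤ l p) (j : ℕ) (hj : j ≤ n) :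
    pre (ww n l p) j = ff n l p j := by
  induction j with
  | zero => rw [ff_zero n l p h2]; simp [pre]
  | succ j ih =>
    have h1 := pre_succ (ww n l p) ⟨j, hj⟩
    have h3 := ff_mono n l p (Nat.le_succ j)
    have h4 : ww n l p ⟨j, hj⟩ = ff n l p (j + 1) - ff n l p j := rfl
    have h5 := ih (by omega)
    simp only [Nat.succ_eq_add_one] at h3
    simp only at h1
    omega

lemma ff_n (n : ℕ) (l : ℕ → ℕ) (p : ℕ) (hp : 1 ≤ p) (hq : p ≤ n - 2) : ff n l p n = l p := by
  unfold ff; grind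

lemma maxVar_ww (n : ℕ) (l : ℕ → ℕ) (p : ℕ) (h2 : 2 ≤ l p) (hp : 1 ≤ p) (hq : p ≤ n - 2) :
    maxVar (ww n l p) = n - p + 1 := by
  apply le_antisymm
  · rw [maxVar_le_s4]
    intro i hi
    by_contra hc
    apply hi
    have hh : n - p + 1 ≤ (i : ℕ) := by omega
    simp only [ww, ff]
    rw [if_pos (by omega), if_pos hh]
    omega
  · have hlt : n - p < n := by omega
    have := (maxVar_le_s4 (ww n l p) (maxVar (ww n l p))).1 le_rfl ⟨n - p, hlt⟩ (by
      simp only [ww, ff]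
      grind)
    simpa using this

def II (n : ℕ) (l : ℕ → ℕ) : Set (Mon n) :=
  {u | ∃ p, 1 ≤ p ∧ p ≤ n - 2 ∧ ∀ j ≤ n, ff n l p j ≤ pre u j}

lemma minGens_II (n : ℕ) (l : ℕ → ℕ) (h2 : ∀ p, 1 ≤ p → p ≤ n - 2 → 2 ≤ l p)
    (u : Mon n) (hu : u ∈ minGens (II n l)) :
    ∃ p, 1 ≤ p ∧ p ≤ n - 2 ∧ degree u = l p ∧ maxVar u ≤ n - p + 1 := by
  obtain ⟨⟨p, hp, hq, h⟩, hmin⟩ := hu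
  have hd : l p ≤ degree u := by
    have := h n le_rfl
    rwa [ff_n n l p hp hq, pre_n] at this
  have hdeg : degree u = l p := by
    by_contra hne
    have hne' : (Finset.univ.filter (fun i : Fin n => u i ≠ 0)).Nonempty := by
      by_contra hcon
      rw [Finset.not_nonempty_iff_eq_empty, Finset.filter_eq_empty_iff] at hcon
      have : degree u = 0 := by
        unfold degree
        apply Finset.sum_eq_zero
        intro i hi
        have := hcon hi
        simpa using this
      have := h2 p hp hq
      omega
    obtain ⟨i, hi, hmax⟩ := Finset.exists_max_image _ (fun i : Fin n => (i : ℕ)) hne'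
    have hi' : u i ≠ 0 := by simpa using hi
    have hmem : u - Pi.single i 1 ∈ II n l := by
      refine ⟨p, hp, hq, ?_⟩
      intro j hj
      have hs := pre_sub u i hi' j
      have hfj := h j hj
      by_cases hij : (i : ℕ) < j
      · rw [if_pos hij] at hs
        have hall : pre u j = degree u := by
          rw [← pre_n]
          unfold pre
          apply Finset.sum_subset (Finset.range_mono hj)
          intro t ht htj
          simp only [Finset.mem_range] at ht htj
          rw [dif_pos ht]
          by_contra hnz
          have := hmax ⟨t, ht⟩ (by simpa using hnz)
          simp at this
          omega
        have hle : ff n l p j ≤ l p := by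
          rw [← ff_n n l p hp hq]; exact ff_mono n l p hj
        omega
      · rw [if_neg hij] at hs
        omega
    have := hmin _ hmem (fun t => by simp)
    have := congrFun this i
    simp at this
    omega
  refine ⟨p, hp, hq, hdeg, ?_⟩
  rw [maxVar_le_s4]
  intro i hi
  by_contra hc
  have h1 := h (n - p + 1) (by omega)
  have h3 : ff n l p (n - p + 1) = l p := by unfold ff; simp
  have h4 := pre_mono u (show n - p + 1 ≤ (i : ℕ) by omega)
  have h5 := pre_succ u i
  have h6 := pre_mono u (show (i : ℕ) + 1 ≤ n from i.2)
  rw [pre_n] at h6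
  omega

lemma ww_gens (n : ℕ) (l : ℕ → ℕ) (h2 : ∀ p, 1 ≤ p → p ≤ n - 2 → 2 ≤ l p)
    (hlinc : ∀ i j, 1 ≤ i → i < j → j ≤ n - 2 → l i < l j)
    (p : ℕ) (hp : 1 ≤ p) (hq : p ≤ n - 2) : ww n l p ∈ gens (II n l) (l p) := by
  have hdeg : degree (ww n l p) = l p := by
    rw [← pre_n, pre_ww n l p (h2 p hp hq) n le_rfl, ff_n n l p hp hq]
  refine ⟨⟨⟨p, hp, hq, fun j hj => (pre_ww n l p (h2 p hp hq) j hj).ge⟩, ?_⟩, hdeg⟩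
  rintro v ⟨q, hq1, hq2, hv⟩ hle
  by_contra hne
  have hlt : degree v < degree (ww n l p) := by
    unfold degree
    apply Finset.sum_lt_sum (fun i _ => hle i)
    by_contra hcon
    push Not at hcon
    exact hne (funext fun i => le_antisymm (hle i) (hcon i (Finset.mem_univ _)))
  have h1 := hv n le_rfl
  rw [ff_n n l q hq1 hq2, pre_n] at h1
  have hqp : q < p := by
    rcases lt_trichotomy q p with h | h | h
    · exact h
    · subst h; omega
    · have := hlinc p q hp h hq2; omega
  obtain ⟨j, hj, hlt'⟩ := ff_not n l q p hqp hq hq1 (h2 q hq1 hq2) (hlinc q p hq1 hqp hq)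
  have := hv j hj
  have h3 := pre_le hle j
  rw [pre_ww n l p (h2 p hp hq) j hj] at h3
  omega

/-- Let `n ≥ 4` and `(k_1,ℓ_1),…,(k_{n−2},ℓ_{n−2})` with
`n−1 ≥ k_1 > … > k_{n−2} ≥ 2` and `ℓ_1 = 2 < ℓ_2 < … < ℓ_{n−2}`. Then there is a
strongly stable ideal `I ⊊ S` of initial degree 2 whose set of corners is exactly
`{(k_i,ℓ_i)}` iff `k_1 + 1 = n`. -/
theorem statement4 (n : ℕ) (hn : 4 ≤ n) (k l : ℕ → ℕ)
    (hk1 : k 1 ≤ n - 1) (hkr : 2 ≤ k (n - 2)) (hl1 : l 1 = 2)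
    (hkdec : ∀ i j, 1 ≤ i → i < j → j ≤ n - 2 → k j < k i)
    (hlinc : ∀ i j, 1 ≤ i → i < j → j ≤ n - 2 → l i < l j) :
    (∃ I : Set (Mon n), StronglyStable I ∧ initialDegree I 2 ∧
        corners I = {c | ∃ i, 1 ≤ i ∧ i ≤ n - 2 ∧ c = (k i, l i)}) ↔
    k 1 + 1 = n := by
  have hup : ∀ i, 1 ≤ i → i ≤ n - 2 → k i ≤ n - i := by
    intro i hi
    induction i, hi using Nat.le_induction with
    | base => intro _; exact hk1
    | succ i hi ih =>
      intro h
      have := hkdec i (i + 1) hi (by omega) h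
      have := ih (by omega)
      omega
  have hdown : ∀ d, d < n - 2 → 2 + d ≤ k (n - 2 - d) := by
    intro d
    induction d with
    | zero => intro _; simpa using hkr
    | succ d ih =>
      intro h
      have := hkdec (n - 2 - (d + 1)) (n - 2 - d) (by omega) (by omega) (by omega)
      have := ih (by omega)
      omega
  have hk : ∀ i, 1 ≤ i → i ≤ n - 2 → k i = n - i := by
    intro i h1 h2
    have a := hup i h1 h2
    have b := hdown (n - 2 - i) (by omega)
    rw [show n - 2 - (n - 2 - i) = i by omega] at b
    omega
  have h2 : ∀ p, 1 ≤ p → p ≤ n - 2 → 2 ≤ l p := by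
    intro p hp hq
    rcases Nat.eq_or_lt_of_le hp with h | h
    · subst h; omega
    · have := hlinc 1 p le_rfl h hq
      omega
  have hinj : ∀ p q, 1 ≤ p → p ≤ n - 2 → 1 ≤ q → q ≤ n - 2 → l p ≤ l q → p ≤ q := by
    intro p q hp hp' hq hq' h
    by_contra hc
    have := hlinc q p hq (by omega) hp'
    omega
  constructor
  · intro _
    have := hk 1 le_rfl (by omega)
    omega
  · intro _
    refine ⟨II n l, ⟨?_, ?_, ?_⟩, ⟨?_, ?_⟩, ?_⟩
    · rintro u ⟨p, hp, hq, h⟩ v huv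
      exact ⟨p, hp, hq, fun j hj => (h j hj).trans (pre_le huv j)⟩
    · rintro ⟨p, hp, hq, h⟩
      have := h n le_rfl
      rw [ff_n n l p hp hq, pre_n] at this
      have := h2 p hp hq
      simp [degree] at *
      omega
    · rintro u ⟨⟨p, hp, hq, h⟩, -⟩ i hi j hji
      refine ⟨p, hp, hq, fun t ht => (h t ht).trans ?_⟩
      rw [pre_sub u i hi t, pre_add, pre_single]
      have : (j : ℕ) < i := hji
      split_ifs <;> omega
    · have := ww_gens n l h2 hlinc 1 le_rfl (by omega)
      exact ⟨_, this.1.1, this.2.trans hl1⟩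
    · rintro u ⟨p, hp, hq, h⟩
      have := h n le_rfl
      rw [ff_n n l p hp hq, pre_n] at this
      exact (h2 p hp hq).trans this
    · ext ⟨a, b⟩
      simp only [corners, Set.mem_ofPred_eq, Prod.mk.injEq]
      constructor
      · rintro ⟨ha, hb, ⟨u, hu, hmu⟩, hle, -⟩
        obtain ⟨p, hp, hq, hd, hm⟩ := minGens_II n l h2 u hu.1
        have hbl : b = l p := hu.2.symm.trans hd
        have hw := ww_gens n l h2 hlinc p hp hq
        rw [← hbl] at hw
        have h5 := hle _ hw
        rw [maxVar_ww n l p (h2 p hp hq) hp hq] at h5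
        have := hk p hp hq
        exact ⟨p, hp, hq, by omega, hbl⟩
      · rintro ⟨p, hp, hq, rfl, rfl⟩
        have hkp := hk p hp hq
        have h2p := h2 p hp hq
        refine ⟨by omega, by omega, ⟨_, ww_gens n l h2 hlinc p hp hq, ?_⟩, ?_, ?_⟩
        · rw [maxVar_ww n l p h2p hp hq, hkp]
        · intro u hu
          obtain ⟨q, hq1, hq2, hd, hm⟩ := minGens_II n l h2 u hu.1
          have := hu.2
          have := hinj p q hp hq hq1 hq2 (by omega)
          omega
        · intro j hj u hu
          obtain ⟨q, hq1, hq2, hd, hm⟩ := minGens_II n l h2 u hu.1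
          have hu2 := hu.2
          have := hinj p q hp hq hq1 hq2 (by omega)
          have : p ≠ q := by rintro rfl; omega
          omega

end ExtremalBetti
end

section
/- Let n ≥ 4, let r be an integer with 1 ≤ r ≤ n−2, and let (k_1,ℓ_1), …, (k_r,ℓ_r) be pairs of positive integers with n−1 ≥ k_1 > k_2 > … > k_r ≥ 2 and 2 = ℓ_1 < ℓ_2 < … < ℓ_r. Then there exists a strongly stable ideal I ⊊ S = K[x_1,…,x_n] of initial degree 2 whose set of corners is exactly {(k_i,ℓ_i) : 1 ≤ i ≤ r} and such that every corner of I has value 1. -/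
namespace ExtremalBetti

/-! ### Helper material -/

/-- Partial sums of exponents: number of letters among the first `j` variables. -/
def pS {n : ℕ} (u : Mon n) (j : ℕ) : ℕ := ∑ i : Fin n, if (i : ℕ) < j then u i else 0

/-- Borel order. -/
def dom {n : ℕ} (u v : Mon n) : Prop := ∀ j, pS u j ≤ pS v j

theorem pS_le_degree {n : ℕ} (u : Mon n) (j : ℕ) : pS u j ≤ degree u := by
  unfold pS degree
  apply Finset.sum_le_sum
  intro i _
  split_ifs <;> simp

theorem pS_full {n : ℕ} (u : Mon n) : pS u n = degree u := by
  unfold pS degree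
  apply Finset.sum_congr rfl
  intro i _
  simp

theorem pS_mono {n : ℕ} {u v : Mon n} (h : ∀ i, u i ≤ v i) (j : ℕ) : pS u j ≤ pS v j := by
  unfold pS
  apply Finset.sum_le_sum
  intro i _
  split_ifs
  · exact h i
  · exact le_rfl

theorem pS_add {n : ℕ} (u v : Mon n) (j : ℕ) : pS (u + v) j = pS u j + pS v j := by
  unfold pS
  rw [← Finset.sum_add_distrib]
  apply Finset.sum_congr rfl
  intro i _
  split_ifs <;> simp

theorem pS_single {n : ℕ} (a : Fin n) (j : ℕ) :
    pS (Pi.single a 1 : Mon n) j = if (a : ℕ) < j then 1 else 0 := by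
  unfold pS
  rw [Finset.sum_eq_single a]
  · simp
  · intro b _ hb
    simp [hb]
  · simp

theorem pS_succ {n : ℕ} (u : Mon n) (a : Fin n) : pS u (a + 1) = pS u a + u a := by
  unfold pS
  have h : ∀ i : Fin n, (if (i : ℕ) < (a : ℕ) + 1 then u i else 0)
      = (if (i : ℕ) < (a : ℕ) then u i else 0) + (if i = a then u i else 0) := by
    intro i
    by_cases h1 : i = a
    · subst h1; simp
    · have : (i : ℕ) ≠ a := fun h => h1 (Fin.ext h)
      have h2 : ((i : ℕ) < (a : ℕ) + 1) ↔ ((i : ℕ) < (a : ℕ)) := by omega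
      simp [h1, h2]
  rw [Finset.sum_congr rfl (fun i _ => h i), Finset.sum_add_distrib]
  simp

theorem pS_ext {n : ℕ} {u v : Mon n} (h : ∀ j, j ≤ n → pS u j = pS v j) : u = v := by
  funext a
  have h1 := pS_succ u a
  have h2 := pS_succ v a
  have h3 := h a (by omega)
  have h4 := h (a + 1) (by omega)
  omega

theorem maxVar_le_iff {n : ℕ} (u : Mon n) (c : ℕ) : maxVar u ≤ c ↔ pS u c = degree u := by
  unfold maxVar pS degree
  rw [Finset.sup_le_iff, Finset.sum_eq_sum_iff_of_le]
  · constructor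
    · intro h i _
      by_cases h0 : u i = 0
      · simp [h0]
      · have := h i (by simp [h0])
        rw [if_pos (by omega)]
    · intro h i hi
      have := h i (Finset.mem_univ i)
      have h0 : u i ≠ 0 := by simpa using hi
      by_contra hc
      rw [if_neg (by omega)] at this
      exact h0 this.symm
  · intro i _
    split_ifs <;> simp

theorem drop_last {n : ℕ} {u v : Mon n} (h : dom u v) (hd : degree u < degree v) :
    ∃ v' : Mon n, (∀ i, v' i ≤ v i) ∧ v' ≠ v ∧ dom u v' := by
  have hne : (Finset.univ.filter (fun i : Fin n => v i ≠ 0)).Nonempty := by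
    by_contra hc
    rw [Finset.not_nonempty_iff_eq_empty] at hc
    have : degree v = 0 := by
      unfold degree
      apply Finset.sum_eq_zero
      intro i _
      by_contra h0
      have : i ∈ (Finset.univ.filter (fun i : Fin n => v i ≠ 0)) := by simp [h0]
      rw [hc] at this
      simp at this
    omega
  obtain ⟨a, ha, hmax⟩ := Finset.exists_maximal hne
  have ha0 : v a ≠ 0 := by simpa using ha
  have hlast : ∀ j : ℕ, (a : ℕ) < j → pS v j = degree v := by
    intro j hj
    unfold pS degree
    apply Finset.sum_congr rfl
    intro i _
    by_cases hi : (i : ℕ) < j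
    · simp [hi]
    · rw [if_neg hi]
      by_contra h0
      have h1 : i ∈ (Finset.univ.filter (fun i : Fin n => v i ≠ 0)) := by
        simp; exact fun h => h0 h.symm
      have h2 := hmax h1 (by rw [Fin.le_def]; omega)
      rw [Fin.le_def] at h2
      omega
  have hv : (v - Pi.single a 1) + Pi.single a 1 = v := by
    funext i
    by_cases hi : i = a
    · subst hi; simp; omega
    · simp [hi]
  refine ⟨v - Pi.single a 1, fun i => by simp, ?_, ?_⟩
  · intro he
    have := congrFun he a
    simp at this
    omega
  · intro j
    have h1 := pS_add (v - Pi.single a 1) (Pi.single a 1) j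
    rw [hv, pS_single] at h1
    have h2 := h j
    have h3 := pS_le_degree u j
    have h4 := hlast j
    split_ifs at h1 with h5
    · have := h4 h5
      omega
    · omega

/-- Admissible families of monomials. -/
def Good (n r : ℕ) (k l : ℕ → ℕ) (u : ℕ → Mon n) : Prop :=
  ∀ i, 1 ≤ i → i ≤ r → degree (u i) = l i ∧ maxVar (u i) = k i + 1 ∧
    ∀ p, 1 ≤ p → p < i → ¬ dom (u p) (u i)

/-- The monomial of a word with (0-based) letters. -/
def ofWord (n : ℕ) (f : ℕ → ℕ) (m : ℕ) : Mon n :=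
  fun i => ∑ t ∈ Finset.range m, if f t = (i : ℕ) then 1 else 0

theorem pS_ofWord (n : ℕ) (f : ℕ → ℕ) (m : ℕ) (hf : ∀ t, t < m → f t < n) (j : ℕ) :
    pS (ofWord n f m) j = ((Finset.range m).filter (fun t => f t < j)).card := by
  unfold pS ofWord
  have h1 : ∀ i : Fin n, (if (i : ℕ) < j then
      (∑ t ∈ Finset.range m, if f t = (i : ℕ) then 1 else 0) else 0)
      = ∑ t ∈ Finset.range m, if f t = (i : ℕ) then (if f t < j then 1 else 0) else 0 := by
    intro i
    split_ifs with h
    · apply Finset.sum_congr rfl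
      intro t _
      split_ifs <;> first | rfl | omega
    · symm
      apply Finset.sum_eq_zero
      intro t _
      split_ifs <;> first | rfl | omega
  rw [Finset.sum_congr rfl (fun i _ => h1 i), Finset.sum_comm, Finset.card_filter]
  apply Finset.sum_congr rfl
  intro t ht
  have htn := hf t (Finset.mem_range.mp ht)
  rw [Finset.sum_eq_single (⟨f t, htn⟩ : Fin n)]
  · simp
  · intro b _ hb
    rw [if_neg]
    intro h
    exact hb (Fin.ext h.symm)
  · simp

theorem exists_good (n r : ℕ) (k l : ℕ → ℕ)
    (hk1 : ∀ q, 1 ≤ q → q ≤ r → k q < n) (hk : ∀ q, 1 ≤ q → q ≤ r → r - q + 2 ≤ k q)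
    (hl : ∀ q, 1 ≤ q → q ≤ r → q + 1 ≤ l q)
    (hlinc : ∀ i j, 1 ≤ i → i < j → j ≤ r → l i < l j) :
    ∃ u, Good n r k l u := by
  obtain ⟨f, hf⟩ : ∃ f : ℕ → ℕ → ℕ, ∀ q t, f q t =
    if t + 1 = l q then k q else if t + 1 ≤ r - q then min (q - 1) (t + 1)
      else min (q - 1) (k q) := ⟨_, fun _ _ => rfl⟩
  have hfk : ∀ q, 1 ≤ q → q ≤ r → ∀ t, f q t ≤ k q := by
    intro q h1 h2 t
    have := hk q h1 h2
    rw [hf]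
    split_ifs <;> omega
  have hmono : ∀ q, 1 ≤ q → q ≤ r → ∀ t t', t ≤ t' → t' < l q → f q t ≤ f q t' := by
    intro q h1 h2 t t' ht ht'
    have := hk q h1 h2
    rw [hf, hf]
    split_ifs <;> omega
  have hfn : ∀ q, 1 ≤ q → q ≤ r → ∀ t, t < l q → f q t < n := by
    intro q h1 h2 t _
    have := hk1 q h1 h2
    have := hfk q h1 h2 t
    omega
  refine ⟨fun q => ofWord n (f q) (l q), ?_⟩
  intro q h1 h2
  have hS := pS_ofWord n (f q) (l q) (hfn q h1 h2)
  have hdeg : degree (ofWord n (f q) (l q)) = l q := by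
    rw [← pS_full, hS, Finset.filter_true_of_mem, Finset.card_range]
    intro t ht
    exact hfn q h1 h2 t (Finset.mem_range.mp ht)
  refine ⟨hdeg, ?_, ?_⟩
  · show maxVar (ofWord n (f q) (l q)) = k q + 1
    apply le_antisymm
    · rw [maxVar_le_iff, hdeg, hS, Finset.filter_true_of_mem, Finset.card_range]
      intro t _
      have := hfk q h1 h2 t
      omega
    · by_contra hc
      have hc' : maxVar (ofWord n (f q) (l q)) ≤ k q := by omega
      rw [maxVar_le_iff, hdeg, hS] at hc'
      have hq := hl q h1 h2
      have hsub : (Finset.range (l q)).filter (fun t => f q t < k q) ⊆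
          Finset.range (l q - 1) := by
        intro t ht
        rw [Finset.mem_filter, Finset.mem_range] at ht
        rw [Finset.mem_range]
        by_contra hn
        have h3 : t + 1 = l q := by omega
        have h4 := hf q t
        rw [if_pos h3] at h4
        omega
      have := Finset.card_le_card hsub
      rw [Finset.card_range] at this
      omega
  · intro p hp hpq hdom
    have hpr : p ≤ r := by omega
    have e1 := hk p hp hpr
    have e2 := hk q h1 h2
    have e3 := hl p hp hpr
    have e4 := hl q h1 h2
    have e5 := hlinc p q hp hpq h2
    obtain ⟨t, ht, hlt⟩ : ∃ t, t < l p ∧ f p t < f q t := by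
      by_cases hc : r - q + 1 ≤ l p - 1
      · refine ⟨r - q, by omega, ?_⟩
        rw [hf, hf, if_neg (by omega), if_pos (by omega), if_neg (by omega), if_neg (by omega)]
        omega
      · refine ⟨l p - 2, by omega, ?_⟩
        rw [hf, hf, if_neg (by omega), if_pos (by omega), if_neg (by omega), if_pos (by omega)]
        omega
    have hd := hdom (f p t + 1)
    simp only at hd
    rw [hS, pS_ofWord n (f p) (l p) (hfn p hp hpr)] at hd
    have s1 : Finset.range (t + 1) ⊆
        (Finset.range (l p)).filter (fun t' => f p t' < f p t + 1) := by
      intro t' ht'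
      rw [Finset.mem_range] at ht'
      rw [Finset.mem_filter, Finset.mem_range]
      have := hmono p hp hpr t' t (by omega) ht
      exact ⟨by omega, by omega⟩
    have s2 : (Finset.range (l q)).filter (fun t' => f q t' < f p t + 1) ⊆
        Finset.range t := by
      intro t' ht'
      rw [Finset.mem_filter, Finset.mem_range] at ht'
      rw [Finset.mem_range]
      by_contra hn
      have := hmono q h1 h2 t t' (by omega) ht'.1
      omega
    have c1 := Finset.card_le_card s1
    have c2 := Finset.card_le_card s2
    rw [Finset.card_range] at c1 c2
    omega

/-- Total weight of a family. -/
def weight {n : ℕ} (r : ℕ) (u : ℕ → Mon n) : ℕ :=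
  ∑ i ∈ Finset.Icc 1 r, ∑ j ∈ Finset.range (n + 1), pS (u i) j

theorem exists_max (n r : ℕ) (k l : ℕ → ℕ) (h : ∃ u : ℕ → Mon n, Good n r k l u) :
    ∃ u : ℕ → Mon n, Good n r k l u ∧ ∀ v, Good n r k l v → weight r v ≤ weight r u := by
  have hne : {N | ∃ u : ℕ → Mon n, Good n r k l u ∧ weight r u = N}.Nonempty := by
    obtain ⟨u, hu⟩ := h
    exact ⟨_, u, hu, rfl⟩
  have hb : BddAbove {N | ∃ u : ℕ → Mon n, Good n r k l u ∧ weight r u = N} := by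
    refine ⟨∑ i ∈ Finset.Icc 1 r, ∑ j ∈ Finset.range (n + 1), l i, ?_⟩
    rintro N ⟨u, hu, rfl⟩
    unfold weight
    apply Finset.sum_le_sum
    intro i hi
    rw [Finset.mem_Icc] at hi
    apply Finset.sum_le_sum
    intro j _
    rw [← (hu i hi.1 hi.2).1]
    exact pS_le_degree _ _
  obtain ⟨u, hu, hw⟩ := Nat.sSup_mem hne hb
  refine ⟨u, hu, fun v hv => ?_⟩
  rw [hw]
  exact le_csSup hb ⟨v, hv, rfl⟩

theorem max_unique {n r : ℕ} {k l : ℕ → ℕ} {u : ℕ → Mon n} (hu : Good n r k l u)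
    (hmax : ∀ v, Good n r k l v → weight r v ≤ weight r u) {q : ℕ} (hq1 : 1 ≤ q) (hqr : q ≤ r)
    {v : Mon n} (hdeg : degree v = l q) (hmv : maxVar v = k q + 1) (hdom : dom (u q) v)
    (hnot : ∀ p, 1 ≤ p → p < q → ¬ dom (u p) v) : v = u q := by
  have hg : Good n r k l (Function.update u q v) := by
    intro i hi1 hir
    by_cases hiq : i = q
    · subst hiq
      rw [Function.update_self]
      refine ⟨hdeg, hmv, fun p hp hpi => ?_⟩
      rw [Function.update_of_ne (by omega)]
      exact hnot p hp hpi
    · rw [Function.update_of_ne hiq]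
      obtain ⟨a, b, c⟩ := hu i hi1 hir
      refine ⟨a, b, fun p hp hpi hd => ?_⟩
      by_cases hpq : p = q
      · subst hpq
        rw [Function.update_self] at hd
        exact c p hp hpi (fun j => (hdom j).trans (hd j))
      · rw [Function.update_of_ne hpq] at hd
        exact c p hp hpi hd
  have hw := hmax _ hg
  have hle : ∀ i, dom (u i) (Function.update u q v i) := by
    intro i
    by_cases hiq : i = q
    · subst hiq
      rw [Function.update_self]
      exact hdom
    · rw [Function.update_of_ne hiq]
      exact fun j => le_rfl
  apply pS_ext
  intro j hj
  by_contra hne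
  have hlt : pS (u q) j < pS v j := lt_of_le_of_ne (hdom j) (fun h => hne h.symm)
  have : weight r u < weight r (Function.update u q v) := by
    unfold weight
    apply Finset.sum_lt_sum
    · intro i _
      exact Finset.sum_le_sum (fun j _ => hle i j)
    · refine ⟨q, Finset.mem_Icc.mpr ⟨hq1, hqr⟩, ?_⟩
      apply Finset.sum_lt_sum
      · exact fun j _ => hle q j
      · refine ⟨j, Finset.mem_range.mpr (by omega), ?_⟩
        rw [Function.update_self]
        exact hlt
  omega

/-- Let `n ≥ 4`, `1 ≤ r ≤ n−2`, and `(k_1,ℓ_1),…,(k_r,ℓ_r)` with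
`n−1 ≥ k_1 > … > k_r ≥ 2` and `2 = ℓ_1 < … < ℓ_r`. Then there exists a strongly
stable ideal `I ⊊ S` of initial degree 2 whose set of corners is exactly
`{(k_i,ℓ_i) : 1 ≤ i ≤ r}` and such that every corner of `I` has value 1. -/
theorem statement5 (n r : ℕ) (hn : 4 ≤ n) (hr1 : 1 ≤ r) (hr : r ≤ n - 2)
    (k l : ℕ → ℕ)
    (hk1 : k 1 ≤ n - 1) (hkr : 2 ≤ k r) (hl1 : l 1 = 2)
    (hkdec : ∀ i j, 1 ≤ i → i < j → j ≤ r → k j < k i)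
    (hlinc : ∀ i j, 1 ≤ i → i < j → j ≤ r → l i < l j) :
    ∃ I : Set (Mon n), StronglyStable I ∧ initialDegree I 2 ∧
      corners I = {c | ∃ i, 1 ≤ i ∧ i ≤ r ∧ c = (k i, l i)} ∧
      ∀ i, 1 ≤ i → i ≤ r → cornerValue I (k i) (l i) = 1 := by
  have hkq : ∀ d q, 1 ≤ q → q + d = r → d + 2 ≤ k q := by
    intro d
    induction d with
    | zero =>
      intro q _ h
      have : q = r := by omega
      subst this
      omega
    | succ d ih =>
      intro q h1 h
      have a := ih (q + 1) (by omega) (by omega)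
      have b := hkdec q (q + 1) h1 (by omega) (by omega)
      omega
  have hlq : ∀ q, 1 ≤ q → q ≤ r → q + 1 ≤ l q := by
    intro q h1
    induction q, h1 using Nat.le_induction with
    | base => intro _; omega
    | succ q hq ih =>
      intro h
      have a := ih (by omega)
      have b := hlinc q (q + 1) hq (by omega) h
      omega
  have hkn : ∀ q, 1 ≤ q → q ≤ r → k q < n := by
    intro q h1 h2
    rcases Nat.eq_or_lt_of_le h1 with h | h
    · subst h; omega
    · have := hkdec 1 q le_rfl h h2
      omega
  have hkq' : ∀ q, 1 ≤ q → q ≤ r → r - q + 2 ≤ k q :=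
    fun q h1 h2 => hkq (r - q) q h1 (by omega)
  obtain ⟨u, hu, hmax⟩ := exists_max n r k l (exists_good n r k l hkn hkq' hlq hlinc)
  have hdd : ∀ {a b : Mon n}, dom a b → degree a ≤ degree b := by
    intro a b h
    rw [← pS_full a, ← pS_full b]
    exact h n
  obtain ⟨I, hI⟩ : ∃ I : Set (Mon n), ∀ v, v ∈ I ↔ ∃ p, 1 ≤ p ∧ p ≤ r ∧ dom (u p) v :=
    ⟨{v | ∃ p, 1 ≤ p ∧ p ≤ r ∧ dom (u p) v}, fun v => Iff.rfl⟩
  -- generators have the degree of every dominated word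
  have hgen : ∀ v ∈ minGens I, ∀ p, 1 ≤ p → p ≤ r → dom (u p) v → degree v = l p := by
    intro v hv p hp hpr hd
    have hdeg := (hu p hp hpr).1
    have hle := hdd hd
    by_contra hne
    obtain ⟨v', h1, h2, h3⟩ := drop_last hd (by omega)
    exact h2 (hv.2 v' ((hI v').mpr ⟨p, hp, hpr, h3⟩) h1)
  have hgl : ∀ v ∈ minGens I, ∃ p, 1 ≤ p ∧ p ≤ r ∧ degree v = l p ∧ dom (u p) v ∧
      maxVar v ≤ k p + 1 := by
    intro v hv
    obtain ⟨p, hp, hpr, hd⟩ := (hI v).mp hv.1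
    have hdeg := hgen v hv p hp hpr hd
    refine ⟨p, hp, hpr, hdeg, hd, ?_⟩
    obtain ⟨a, b, _⟩ := hu p hp hpr
    rw [maxVar_le_iff]
    have h1 := (maxVar_le_iff (u p) (k p + 1)).mp b.le
    have h2 := hd (k p + 1)
    have h3 := pS_le_degree v (k p + 1)
    omega
  have hlinj : ∀ p q, 1 ≤ p → p ≤ r → 1 ≤ q → q ≤ r → l p = l q → p = q := by
    intro p q hp hpr hq hqr h
    rcases lt_trichotomy p q with h' | h' | h'
    · have := hlinc p q hp h' hqr
      omega
    · exact h'
    · have := hlinc q p hq h' hpr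
      omega
  have humem : ∀ q, 1 ≤ q → q ≤ r → u q ∈ gens I (l q) := by
    intro q hq hqr
    obtain ⟨a, b, c⟩ := hu q hq hqr
    refine ⟨⟨(hI _).mpr ⟨q, hq, hqr, fun j => le_rfl⟩, ?_⟩, a⟩
    intro v hv hle
    obtain ⟨p, hp, hpr, hd⟩ := (hI v).mp hv
    have hvu : dom v (u q) := fun j => pS_mono hle j
    have hpu : dom (u p) (u q) := fun j => (hd j).trans (hvu j)
    have hqp : q ≤ p := by
      by_contra hc
      exact c p hp (by omega) hpu
    have h1 := hdd hd
    have h2 := hdd hvu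
    have h3 := (hu p hp hpr).1
    have hpq : p = q := by
      by_contra hne
      have := hlinc q p hq (by omega) hpr
      omega
    subst hpq
    exact pS_ext (fun j _ => le_antisymm (hvu j) (hd j))
  have hcorner : ∀ q, 1 ≤ q → q ≤ r → IsCorner I (k q) (l q) := by
    intro q hq hqr
    have e1 := hkq' q hq hqr
    have e2 := hlq q hq hqr
    refine ⟨by omega, by omega, ⟨u q, humem q hq hqr, (hu q hq hqr).2.1⟩, ?_, ?_⟩
    · intro v hv
      obtain ⟨p, hp, hpr, h1, _, h2⟩ := hgl v hv.1
      have := hlinj p q hp hpr hq hqr (by rw [← h1, hv.2])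
      subst this
      exact h2
    · intro j hj v hv
      obtain ⟨p, hp, hpr, h1, _, h2⟩ := hgl v hv.1
      have h3 := hv.2
      have hqp : q < p := by
        by_contra hc
        rcases Nat.eq_or_lt_of_le (Nat.le_of_not_lt hc) with h | h
        · subst h; omega
        · have := hlinc p q hp h hqr
          omega
      have := hkdec q p hq hqp hpr
      omega
  refine ⟨I, ⟨?_, ?_, ?_⟩, ⟨?_, ?_⟩, ?_, ?_⟩
  · intro v hv w hvw
    obtain ⟨p, hp, hpr, hd⟩ := (hI v).mp hv
    exact (hI w).mpr ⟨p, hp, hpr, fun j => (hd j).trans (pS_mono hvw j)⟩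
  · intro h0
    obtain ⟨p, hp, hpr, hd⟩ := (hI _).mp h0
    have h1 := hdd hd
    have h2 := (hu p hp hpr).1
    have h3 := hlq p hp hpr
    have h4 : degree (0 : Mon n) = 0 := by simp [degree]
    omega
  · intro v hv i hi j hj
    obtain ⟨p, hp, hpr, hd⟩ := (hI v).mp hv.1
    refine (hI _).mpr ⟨p, hp, hpr, fun m => (hd m).trans ?_⟩
    have hvv : (v - Pi.single i 1) + Pi.single i 1 = v := by
      funext a
      by_cases ha : a = i
      · subst ha; simp; omega
      · simp [ha]
    have h1 := pS_add (v - Pi.single i 1) (Pi.single i 1) m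
    rw [hvv, pS_single] at h1
    rw [pS_add, pS_single, h1]
    rw [Fin.lt_def] at hj
    split_ifs <;> omega
  · have := humem 1 le_rfl hr1
    exact ⟨u 1, this.1.1, by rw [this.2, hl1]⟩
  · intro v hv
    obtain ⟨p, hp, hpr, hd⟩ := (hI v).mp hv
    have h1 := hdd hd
    have h2 := (hu p hp hpr).1
    have h3 := hlq p hp hpr
    omega
  · ext ⟨a, b⟩
    constructor
    · rintro ⟨_, _, ⟨v, hv, hmv⟩, hle, _⟩
      simp only at hv hmv hle
      obtain ⟨p, hp, hpr, h1, _, h2⟩ := hgl v hv.1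
      have hb : b = l p := by rw [← h1, hv.2]
      have h3 := hle (u p) (hb ▸ humem p hp hpr)
      have h4 := (hu p hp hpr).2.1
      have ha : a = k p := by omega
      exact ⟨p, hp, hpr, by rw [ha, hb]⟩
    · rintro ⟨p, hp, hpr, h⟩
      rw [h]
      exact hcorner p hp hpr
  · intro q hq hqr
    have : {v ∈ gens I (l q) | maxVar v = k q + 1} = {u q} := by
      ext v
      constructor
      · rintro ⟨hv, hmv⟩
        obtain ⟨p, hp, hpr, h1, h2, _⟩ := hgl v hv.1
        have := hlinj p q hp hpr hq hqr (by rw [← h1, hv.2])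
        subst this
        refine max_unique hu hmax hp hpr h1 hmv h2 ?_
        intro s hs hsp hd
        have h3 := hgen v hv.1 s hs (by omega) hd
        have := hlinc s p hs hsp hpr
        omega
      · rintro rfl
        exact ⟨humem q hq hqr, (hu q hq hqr).2.1⟩
    unfold cornerValue
    rw [this, Set.ncard_singleton]

end ExtremalBetti
end

section
/- Let M = ⊕_{j=1}^m I_j e_j be a strongly stable submodule of S^m whose set of corners is {(k_1,ℓ_1),…,(k_r,ℓ_r)} (1 ≤ r ≤ n−1), the corner (k_i,ℓ_i) having value a_i. Then there exists a strongly stable submodule M̃ = ⊕_{j=1}^m Ĩ_j e_j of S^m such that: (i) the set of corners of M̃ equals the set of corners of M; (ii) for each i, the corner (k_i,ℓ_i) of M̃ has value a_i; and (iii) for every j such that some corner of the ideal Ĩ_j is a corner of M̃, every corner of Ĩ_j is a corner of M̃. -/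
namespace ExtremalBetti

theorem degree_mono {n : ℕ} {u v : Mon n} (h : ∀ i, u i ≤ v i) : degree u ≤ degree v :=
  Finset.sum_le_sum fun i _ => h i

theorem maxVar_le_iff_s13 {n : ℕ} (u : Mon n) (b : ℕ) :
    maxVar u ≤ b ↔ ∀ i : Fin n, u i ≠ 0 → (i : ℕ) + 1 ≤ b := by
  simp [maxVar, Finset.sup_le_iff]

theorem maxVar_mono {n : ℕ} {u v : Mon n} (h : ∀ i, u i ≤ v i) : maxVar u ≤ maxVar v := by
  rw [maxVar_le_iff_s13]
  intro i hi
  have h2 := (maxVar_le_iff_s13 v (maxVar v)).1 le_rfl i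
  apply h2
  have := h i
  omega

theorem maxVar_move {n : ℕ} (u : Mon n) (i j : Fin n) (hi : u i ≠ 0) (hj : j < i) :
    maxVar (u - Pi.single i 1 + Pi.single j 1) ≤ maxVar u := by
  rw [maxVar_le_iff_s13]
  intro q hq
  have h2 := (maxVar_le_iff_s13 u (maxVar u)).1 le_rfl
  by_cases hqj : q = j
  · subst hqj
    have := h2 i hi
    have : (q : ℕ) < i := hj
    omega
  · apply h2
    intro h0
    apply hq
    simp [h0, hqj]

theorem degree_move {n : ℕ} (u : Mon n) (i j : Fin n) (hi : u i ≠ 0) :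
    degree (u - Pi.single i 1 + Pi.single j 1) = degree u := by
  have h : (u - Pi.single i 1) + Pi.single i 1 = u := by
    funext q
    by_cases hq : q = i
    · subst hq
      simp
      omega
    · simp [hq]
  have h1 : degree ((u - Pi.single i 1) + Pi.single i 1) = degree u := by rw [h]
  have h3 : ∀ (v : Mon n) (q : Fin n), degree (v + Pi.single q 1) = degree v + 1 := by
    intro v q
    simp [degree, Finset.sum_add_distrib]
  rw [h3] at h1
  rw [h3, h1]

/-- `u` is dominated by some pair in `T`. -/
def Dominated {n : ℕ} (T : Set (ℕ × ℕ)) (u : Mon n) : Prop :=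
  ∃ c ∈ T, maxVar u ≤ c.1 + 1 ∧ degree u ≤ c.2

/-- The ideal generated by the elements of `I` dominated by `T`. -/
def domIdeal {n : ℕ} (T : Set (ℕ × ℕ)) (I : Set (Mon n)) : Set (Mon n) :=
  {u | ∃ v ∈ I, Dominated T v ∧ ∀ i, v i ≤ u i}

theorem Dominated.mono {n : ℕ} {T : Set (ℕ × ℕ)} {u v : Mon n} (h : ∀ i, v i ≤ u i)
    (hu : Dominated T u) : Dominated T v := by
  obtain ⟨c, hc, h1, h2⟩ := hu
  exact ⟨c, hc, (maxVar_mono h).trans h1, (degree_mono h).trans h2⟩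

theorem mem_minGens_domIdeal {n : ℕ} {T : Set (ℕ × ℕ)} {I : Set (Mon n)} (hI : IsMonIdeal I)
    (u : Mon n) : u ∈ minGens (domIdeal T I) ↔ u ∈ minGens I ∧ Dominated T u := by
  constructor
  · rintro ⟨⟨v, hv, hd, hle⟩, hmin⟩
    have hvu : v = u := hmin v ⟨v, hv, hd, fun _ => le_rfl⟩ hle
    subst hvu
    exact ⟨⟨hv, fun w hw hwv => hmin w ⟨w, hw, hd.mono hwv, fun _ => le_rfl⟩ hwv⟩, hd⟩
  · rintro ⟨⟨hu, hmin⟩, hd⟩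
    refine ⟨⟨u, hu, hd, fun _ => le_rfl⟩, ?_⟩
    rintro w ⟨v, hv, _, hvw⟩ hwu
    exact hmin w (hI v hv w hvw) hwu

theorem mem_gens_domIdeal {n : ℕ} {T : Set (ℕ × ℕ)} {I : Set (Mon n)} (hI : IsMonIdeal I)
    (d : ℕ) (u : Mon n) : u ∈ gens (domIdeal T I) d ↔ u ∈ gens I d ∧ Dominated T u := by
  constructor
  · rintro ⟨h, hd⟩
    obtain ⟨h1, h2⟩ := (mem_minGens_domIdeal hI u).1 h
    exact ⟨⟨h1, hd⟩, h2⟩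
  · rintro ⟨⟨h, hd⟩, h2⟩
    exact ⟨(mem_minGens_domIdeal hI u).2 ⟨h, h2⟩, hd⟩

theorem stronglyStable_domIdeal {n : ℕ} (T : Set (ℕ × ℕ)) {I : Set (Mon n)}
    (hI : StronglyStable I) : StronglyStable (domIdeal T I) := by
  obtain ⟨h1, h2, h3⟩ := hI
  refine ⟨?_, ?_, ?_⟩
  · rintro u ⟨v, hv, hd, hle⟩ w hw
    exact ⟨v, hv, hd, fun i => (hle i).trans (hw i)⟩
  · rintro ⟨v, hv, _, hle⟩
    exact h2 (h1 v hv 0 hle)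
  · intro u hu i hi j hj
    obtain ⟨hu, c, hc, hm, hd⟩ := (mem_minGens_domIdeal h1 u).1 hu
    exact ⟨_, h3 u hu i hi j hj, ⟨c, hc, (maxVar_move u i j hi hj).trans hm,
      (degree_move u i j hi).le.trans hd⟩, fun _ => le_rfl⟩

/-- The corners of the module realized by the ideal `I j`. -/
def cornersOf {n m : ℕ} (I : Fin m → Set (Mon n)) (j : Fin m) : Set (ℕ × ℕ) :=
  {c | c ∈ cornersMod I ∧ ∃ u ∈ gens (I j) c.2, maxVar u = c.1 + 1}

theorem gens_at_corner {n m : ℕ} {I : Fin m → Set (Mon n)} (hI : ∀ j, IsMonIdeal (I j))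
    {c : ℕ × ℕ} (hc : c ∈ cornersMod I) (j : Fin m) (u : Mon n) (hm : maxVar u = c.1 + 1) :
    u ∈ gens (domIdeal (cornersOf I j) (I j)) c.2 ↔ u ∈ gens (I j) c.2 := by
  rw [mem_gens_domIdeal (hI j)]
  exact ⟨fun h => h.1, fun h => ⟨h, c, ⟨hc, u, h, hm⟩, hm.le, h.2.le⟩⟩

/-- A maximal position of a dominated generator is a corner of the module. -/
theorem corner_of_gen {n m : ℕ} {I : Fin m → Set (Mon n)} (hI : ∀ j, IsMonIdeal (I j))
    (j : Fin m) (k l : ℕ)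
    (hex : ∃ u ∈ gens (domIdeal (cornersOf I j) (I j)) l, maxVar u = k + 1)
    (heq : ∀ u ∈ gens (domIdeal (cornersOf I j) (I j)) l, maxVar u ≤ k + 1)
    (hgt : ∀ d, l < d → ∀ u ∈ gens (domIdeal (cornersOf I j) (I j)) d, maxVar u ≤ k) :
    (k, l) ∈ cornersMod I := by
  obtain ⟨u, hu, hm⟩ := hex
  obtain ⟨hu, c, hc, hcm, hcd⟩ := (mem_gens_domIdeal (hI j) l u).1 hu
  obtain ⟨hcM, v, hv, hvm⟩ := hc
  have hvJ := (gens_at_corner hI hcM j v hvm).2 hv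
  have hdu : degree u = l := hu.2
  rcases Nat.lt_or_ge l c.2 with h | h
  · have := hgt c.2 h v hvJ
    omega
  · have hl : c.2 = l := by omega
    rw [hl] at hvJ
    have := heq v hvJ
    have hk : c.1 = k := by omega
    rw [← hl, ← hk]
    exact hcM

theorem cornersMod_dom {n m : ℕ} {I : Fin m → Set (Mon n)} (hI : ∀ j, IsMonIdeal (I j)) :
    cornersMod (fun j => domIdeal (cornersOf I j) (I j)) = cornersMod I := by
  ext ⟨k, l⟩
  constructor
  · rintro ⟨_, _, ⟨j, hex⟩, h4, h5⟩
    exact corner_of_gen hI j k l hex (h4 j) (fun d hd => h5 d hd j)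
  · intro hc
    obtain ⟨h1, h2, ⟨j, u, hu, hm⟩, h4, h5⟩ := id hc
    exact ⟨h1, h2, ⟨j, u, (gens_at_corner hI hc j u hm).2 hu, hm⟩,
      fun j u hu => h4 j u ((mem_gens_domIdeal (hI j) _ u).1 hu).1,
      fun d hd j u hu => h5 d hd j u ((mem_gens_domIdeal (hI j) _ u).1 hu).1⟩

/-- Let `M = ⊕_{j} I_j e_j` be a strongly stable submodule of `S^m`
whose set of corners is `{(k_1,ℓ_1),…,(k_r,ℓ_r)}` (`1 ≤ r ≤ n−1`), the corner
`(k_i,ℓ_i)` having value `a_i`. Then there is a strongly stable submodule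
`M̃ = ⊕_j Ĩ_j e_j` of `S^m` with the same corners and corner values, and such that
for every `j`, if some corner of `Ĩ_j` is a corner of `M̃` then every corner of
`Ĩ_j` is a corner of `M̃`. -/
theorem statement13 (n m r : ℕ) (hr1 : 1 ≤ r) (hr : r ≤ n - 1)
    (k l a : ℕ → ℕ)
    (hk1 : k 1 ≤ n - 1) (hkr : 1 ≤ k r) (hl1 : 1 ≤ l 1)
    (hkdec : ∀ i j, 1 ≤ i → i < j → j ≤ r → k j < k i)
    (hlinc : ∀ i j, 1 ≤ i → i < j → j ≤ r → l i < l j)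
    (I : Fin m → Set (Mon n)) (hSS : ∀ j, StronglyStable (I j))
    (hcor : cornersMod I = {c | ∃ i, 1 ≤ i ∧ i ≤ r ∧ c = (k i, l i)})
    (hval : ∀ i, 1 ≤ i → i ≤ r → cornerValueMod I (k i) (l i) = a i) :
    ∃ J : Fin m → Set (Mon n), (∀ j, StronglyStable (J j)) ∧
      cornersMod J = cornersMod I ∧
      (∀ i, 1 ≤ i → i ≤ r → cornerValueMod J (k i) (l i) = a i) ∧
      (∀ j : Fin m, (∃ c ∈ corners (J j), c ∈ cornersMod J) →
        ∀ c ∈ corners (J j), c ∈ cornersMod J) := by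
  have hI : ∀ j, IsMonIdeal (I j) := fun j => (hSS j).1
  refine ⟨fun j => domIdeal (cornersOf I j) (I j),
    fun j => stronglyStable_domIdeal _ (hSS j), cornersMod_dom hI, ?_, ?_⟩
  · intro i hi1 hir
    rw [← hval i hi1 hir]
    have hc : (k i, l i) ∈ cornersMod I := by
      rw [hcor]
      exact ⟨i, hi1, hir, rfl⟩
    unfold cornerValueMod
    congr 1
    ext p
    constructor
    · rintro ⟨h1, h2⟩
      exact ⟨(gens_at_corner hI hc p.2 p.1 h2).1 h1, h2⟩
    · rintro ⟨h1, h2⟩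
      exact ⟨(gens_at_corner hI hc p.2 p.1 h2).2 h1, h2⟩
  · rintro j - ⟨kk, ll⟩ ⟨_, _, hex, h4, h5⟩
    rw [cornersMod_dom hI]
    exact corner_of_gen hI j kk ll hex h4 h5

end ExtremalBetti
end
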